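/- (Fröhlich 2007, Theorem 1: identification of LATE with covariates) Under the exclusion restriction, conditional independence [Y(0),Y(1),W(0),W(1)] ⟂ Z | X, monotonicity P[W(1) ≥ W(0)] = 1, existence of compliers P[W(1) > W(0)] > 0, and overlap 0 < P(Z=1|X=x) < 1 for almost all x, the local average treatment effect satisfies τ_LATE = E[Y(1)−Y(0) | W(1)>W(0)] = E[μ₁(X) − μ₀(X)] / E[ρ₁(X) − ρ₀(X)], where μ_z(X) = E[Y | X, Z=z] and ρ_z(X) = E[W | X, Z=z]. -/

import Mathlib

/-!
Let `V = (Y0, Y1, W0, W1)` and let `m` be the σ-algebra generated by `X`. The heart of the matter is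
that, for an event `A` (`Z = 1` or `Z = 0`) conditionally independent of `V` given `m` and with
`P(A | m) > 0` almost surely, the conditional expectation given `m` of a latent variable `u ∘ V` is
the same within `A` as in the whole population (`condExp_cond_ae_eq`). Indeed, on an `m`-measurable
set intersected with `A`, both `E[u ∘ V | m]` and `u ∘ V` integrate to the integral of
`P(A | m) * u ∘ V` over the `m`-measurable set: the first by pulling out `m`-measurable factors, the
second by conditional independence. Conditional independence passes from events to integrable
functions by comparing two laws of `V` (`setIntegral_inter_eq_condProb_mul`), so no approximation
argument is needed.

Within `Z = z` the observed `Y` and `W` coincide with functions of `V`, so by the tower property the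
numerator is `E[(W1 - W0) * (Y1 - Y0)]` and the denominator `E[W1 - W0]`. Monotonicity makes
`W1 - W0` the indicator of the compliers, and the ratio is the average effect among them.
-/

open MeasureTheory ProbabilityTheory

section Aux

variable {Ω β : Type*} {m m0 : MeasurableSpace Ω} [MeasurableSpace β]
  {μ : Measure Ω} {A : Set Ω} {V : Ω → β} {u : β → ℝ}

lemma condProb_nonneg (A : Set Ω) : ∀ᵐ ω ∂μ, 0 ≤ (μ⟦A | m⟧) ω :=
  condExp_nonneg (Filter.Eventually.of_forall fun _ => Set.indicator_nonneg (by simp) _)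

lemma condProb_abs_le_one (A : Set Ω) : ∀ᵐ ω ∂μ, |(μ⟦A | m⟧) ω| ≤ 1 := by
  refine ae_bdd_abs_condExp_of_ae_bdd_abs (Filter.Eventually.of_forall fun ω => ?_)
  by_cases h : ω ∈ A <;> simp [h]

lemma integrable_condProb_mul (hm : m ≤ m0) (A : Set Ω) {U : Ω → ℝ} (hU : Integrable U μ) :
    Integrable (fun ω => (μ⟦A | m⟧) ω * U ω) μ :=
  hU.bdd_mul (c := 1) (stronglyMeasurable_condExp.mono hm).aestronglyMeasurable
    (condProb_abs_le_one A)

/-- If `V` and the event `A` are conditionally independent given `m`, then on every `m`-measurable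
set `s` restricting to `A` acts on functions of `V` as the density `P(A | m)`. -/
lemma setIntegral_inter_eq_condProb_mul [IsProbabilityMeasure μ] (hm : m ≤ m0) (hA : MeasurableSet A) (hV : Measurable V)
    (hu : Measurable u)
    (h : ∀ t, MeasurableSet t →
      (μ⟦V ⁻¹' t ∩ A | m⟧) =ᵐ[μ] fun ω => (μ⟦V ⁻¹' t | m⟧) ω * (μ⟦A | m⟧) ω)
    {s : Set Ω} (hs : MeasurableSet[m] s) :
    ∫ ω in s ∩ A, u (V ω) ∂μ = ∫ ω in s, (μ⟦A | m⟧) ω * u (V ω) ∂μ := by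
  have hs0 := hm s hs
  have hqm : Measurable (μ⟦A | m⟧) := (stronglyMeasurable_condExp.mono hm).measurable
  set q := μ⟦A | m⟧ with hq
  have key : (μ.restrict (s ∩ A)).map V
      = ((μ.restrict s).withDensity fun ω => ENNReal.ofReal (q ω)).map V := by
    ext t ht
    have hVt : MeasurableSet (V ⁻¹' t) := hV ht
    rw [Measure.map_apply hV ht, Measure.map_apply hV ht, Measure.restrict_apply hVt,
      withDensity_apply _ hVt, Measure.restrict_restrict hVt,
      ← ofReal_integral_eq_lintegral_ofReal integrable_condExp.integrableOn
        (ae_restrict_of_ae (condProb_nonneg A))]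
    have h_int : Integrable ((V ⁻¹' t).indicator (fun _ => (1 : ℝ))) μ :=
      (integrable_const 1).indicator hVt
    have hqi : Integrable (q * (V ⁻¹' t).indicator (fun _ => (1 : ℝ))) μ :=
      integrable_condProb_mul hm A h_int
    have e1 : ∫ ω in V ⁻¹' t ∩ s, q ω ∂μ = ∫ ω in s, (μ⟦V ⁻¹' t | m⟧) ω * q ω ∂μ := by
      calc ∫ ω in V ⁻¹' t ∩ s, q ω ∂μ
          = ∫ ω in s, (q * (V ⁻¹' t).indicator (fun _ => (1 : ℝ))) ω ∂μ := by
            rw [← Measure.restrict_restrict hVt, ← integral_indicator hVt]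
            congr 1; ext ω; by_cases hω : ω ∈ V ⁻¹' t <;> simp [hω]
        _ = ∫ ω in s, (μ[q * (V ⁻¹' t).indicator (fun _ => (1 : ℝ)) | m]) ω ∂μ :=
            (setIntegral_condExp hm hqi hs).symm
        _ = _ := by
            refine integral_congr_ae (ae_restrict_of_ae ?_)
            filter_upwards [condExp_mul_of_stronglyMeasurable_left
              (stronglyMeasurable_condExp : StronglyMeasurable[m] q) hqi h_int] with ω hω
            rw [hω, Pi.mul_apply, mul_comm]
    have e2 : ∫ ω in s, (μ⟦V ⁻¹' t | m⟧) ω * q ω ∂μ = μ.real (V ⁻¹' t ∩ (s ∩ A)) := by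
      rw [← integral_congr_ae (ae_restrict_of_ae (h t ht)), setIntegral_condExp hm
        ((integrable_const 1).indicator (hVt.inter hA)) hs, integral_indicator (hVt.inter hA),
        Measure.restrict_restrict (hVt.inter hA)]
      simp only [integral_const, smul_eq_mul, mul_one, measureReal_restrict_apply_univ]
      congr 1; ext; simp; tauto
    rw [e1, e2, ofReal_measureReal]
  have h1 := integral_map (μ := μ.restrict (s ∩ A)) hV.aemeasurable hu.aestronglyMeasurable
  have h2 := integral_map (μ := (μ.restrict s).withDensity fun ω => ENNReal.ofReal (q ω))
    hV.aemeasurable hu.aestronglyMeasurable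
  rw [← h1, key, h2, integral_withDensity_eq_integral_toReal_smul hqm.ennreal_ofReal
    (Filter.Eventually.of_forall fun _ => ENNReal.ofReal_lt_top)]
  refine integral_congr_ae (ae_restrict_of_ae ?_)
  filter_upwards [condProb_nonneg (μ := μ) (m := m) A] with ω hω
  rw [ENNReal.toReal_ofReal hω, smul_eq_mul]

/-- Under overlap, the conditional expectation of an observed `T` computed within `A` agrees with
the conditional expectation of the latent `u ∘ V` in the whole population. The equality holds
`μ`-almost everywhere, not only on `A`: the exceptional set is `m`-measurable, and overlap forces
an `m`-measurable set that is null within `A` to be null. -/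
lemma condExp_cond_ae_eq [IsProbabilityMeasure μ] (hm : m ≤ m0) (hA : MeasurableSet A) (hV : Measurable V)
    (hu : Measurable u)
    (h : ∀ t, MeasurableSet t →
      (μ⟦V ⁻¹' t ∩ A | m⟧) =ᵐ[μ] fun ω => (μ⟦V ⁻¹' t | m⟧) ω * (μ⟦A | m⟧) ω)
    (hpos : ∀ᵐ ω ∂μ, 0 < (μ⟦A | m⟧) ω)
    (hU : Integrable (fun ω => u (V ω)) μ) {T : Ω → ℝ} (hT : ∀ ω ∈ A, T ω = u (V ω)) :
    (μ[|A])[T | m] =ᵐ[μ] μ[fun ω => u (V ω) | m] := by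
  set U : Ω → ℝ := fun ω => u (V ω) with hUdef
  set q := μ⟦A | m⟧ with hq
  have h_int : ∀ f : Ω → ℝ, Integrable f μ → Integrable f (μ[|A]) := fun f hf =>
    hf.restrict.smul_measure (by
      have : μ A ≠ 0 := by
        intro h0
        have hz : q =ᵐ[μ] 0 := by
          refine (condExp_congr_ae (indicator_meas_zero h0)).trans ?_
          rw [condExp_zero]
        have : ∀ᵐ _ ∂μ, False := by
          filter_upwards [hz, hpos] with ω h1 h2
          exact h2.ne' h1
        simp at this
        exact IsProbabilityMeasure.ne_zero μ this
      exact ENNReal.inv_ne_top.2 this)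
  have hTU : T =ᵐ[μ[|A]] U :=
    (ae_cond_of_forall_mem hA hT)
  have hcond : (μ[|A])[T | m] =ᵐ[μ[|A]] μ[U | m] := by
    refine (condExp_congr_ae hTU).trans (Filter.EventuallyEq.symm ?_)
    refine ae_eq_condExp_of_forall_setIntegral_eq hm (h_int U hU)
      (fun s _ _ => (h_int _ integrable_condExp).integrableOn) (fun s hs _ => ?_)
      stronglyMeasurable_condExp.aestronglyMeasurable
    have hs0 := hm s hs
    have hres : (μ[|A]).restrict s = (μ A)⁻¹ • μ.restrict (s ∩ A) := by
      rw [ProbabilityTheory.cond, Measure.restrict_smul, Measure.restrict_restrict hs0]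
    rw [hres, integral_smul_measure, integral_smul_measure]
    congr 1
    have hqU : Integrable (q * U) μ := integrable_condProb_mul hm A hU
    have hEi : Integrable (A.indicator (fun _ => (1 : ℝ))) μ := (integrable_const 1).indicator hA
    have hEU : Integrable (A.indicator (fun _ => (1 : ℝ)) * μ[U | m]) μ := by
      have := (integrable_condExp (m := m) (f := U) (μ := μ)).indicator hA
      refine this.congr (Filter.Eventually.of_forall fun ω => ?_)
      by_cases hω : ω ∈ A <;> simp [hω]
    rw [setIntegral_inter_eq_condProb_mul hm hA hV hu h hs]
    calc ∫ ω in s ∩ A, (μ[U | m]) ω ∂μ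
        = ∫ ω in s, (A.indicator (fun _ => (1 : ℝ)) * μ[U | m]) ω ∂μ := by
          rw [Set.inter_comm, ← Measure.restrict_restrict hA, ← integral_indicator hA]
          congr 1; ext ω; by_cases hω : ω ∈ A <;> simp [hω]
      _ = ∫ ω in s, (μ[A.indicator (fun _ => (1 : ℝ)) * μ[U | m] | m]) ω ∂μ :=
          (setIntegral_condExp hm hEU hs).symm
      _ = ∫ ω in s, (q * μ[U | m]) ω ∂μ :=
          integral_congr_ae (ae_restrict_of_ae
            (condExp_mul_of_stronglyMeasurable_right stronglyMeasurable_condExp hEU hEi))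
      _ = ∫ ω in s, (μ[q * U | m]) ω ∂μ :=
          (integral_congr_ae (ae_restrict_of_ae
            (condExp_mul_of_stronglyMeasurable_left stronglyMeasurable_condExp hqU hU))).symm
      _ = ∫ ω in s, q ω * U ω ∂μ := setIntegral_condExp hm hqU hs
  have hBm : MeasurableSet[m] {ω | ((μ[|A])[T | m]) ω ≠ (μ[U | m]) ω} :=
    (stronglyMeasurable_condExp.measurableSet_eq_fun stronglyMeasurable_condExp).compl
  set B := {ω | ((μ[|A])[T | m]) ω ≠ (μ[U | m]) ω} with hB
  have hB0 : μ (A ∩ B) = 0 := by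
    have : (μ[|A]) B = 0 := hcond
    rw [cond_apply hA] at this
    simpa [measure_ne_top] using this
  have hqB : ∫ ω in B, q ω ∂μ = 0 := by
    rw [setIntegral_condExp hm ((integrable_const 1).indicator hA) hBm, integral_indicator hA,
      Measure.restrict_restrict hA, Measure.restrict_eq_zero.2 hB0, integral_zero_measure]
  have hz : q =ᵐ[μ.restrict B] 0 :=
    (integral_eq_zero_iff_of_nonneg_ae (ae_restrict_of_ae (condProb_nonneg A))
      integrable_condExp.integrableOn).1 hqB
  have : ∀ᵐ _ ∂(μ.restrict B), False := by
    filter_upwards [hz, ae_restrict_of_ae hpos] with ω h1 h2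
    exact h2.ne' h1
  change μ B = 0
  simpa using this

end Aux

/-- (Fröhlich 2007, Theorem 1.) Under conditional independence of the potential
outcomes/treatments and the instrument given covariates `X`, monotonicity, existence
of compliers, and overlap `0 < P(Z=1|X) < 1` a.s., the LATE satisfies
`τ_LATE = E[μ₁(X) - μ₀(X)] / E[ρ₁(X) - ρ₀(X)]`, where `μ_z(X) = E[Y | X, Z=z]`
and `ρ_z(X) = E[W | X, Z=z]`. -/
theorem late_identification_with_covariates
    {Ω 𝓧 : Type*} [MeasurableSpace Ω] [StandardBorelSpace Ω] [MeasurableSpace 𝓧]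
    (μ : Measure Ω) [IsProbabilityMeasure μ]
    (Y0 Y1 W0 W1 Z : Ω → ℝ) (X : Ω → 𝓧)
    (hY0m : Measurable Y0) (hY1m : Measurable Y1)
    (hW0m : Measurable W0) (hW1m : Measurable W1)
    (hZm : Measurable Z) (hX : Measurable X)
    (hY0 : Integrable Y0 μ) (hY1 : Integrable Y1 μ)
    (hW0b : ∀ ω, W0 ω = 0 ∨ W0 ω = 1) (hW1b : ∀ ω, W1 ω = 0 ∨ W1 ω = 1)
    (hZb : ∀ ω, Z ω = 0 ∨ Z ω = 1)
    (W Y : Ω → ℝ)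
    (hWdef : W = fun ω => Z ω * W1 ω + (1 - Z ω) * W0 ω)
    (hYdef : Y = fun ω => W ω * Y1 ω + (1 - W ω) * Y0 ω)
    (hindep : CondIndepFun (MeasurableSpace.comap X inferInstance) hX.comap_le
      (fun ω => (Y0 ω, Y1 ω, W0 ω, W1 ω)) Z μ)
    (hmono : ∀ᵐ ω ∂μ, W0 ω ≤ W1 ω)
    (hcomp : 0 < μ {ω | W0 ω < W1 ω})
    (hoverlap : ∀ᵐ ω ∂μ,
      0 < (μ[Z | MeasurableSpace.comap X inferInstance]) ω ∧
        (μ[Z | MeasurableSpace.comap X inferInstance]) ω < 1) :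
    ∫ ω, (Y1 ω - Y0 ω) ∂μ[|{ω | W0 ω < W1 ω}]
      = (∫ ω, (((μ[|{ω' | Z ω' = 1}])[Y | MeasurableSpace.comap X inferInstance]) ω -
               ((μ[|{ω' | Z ω' = 0}])[Y | MeasurableSpace.comap X inferInstance]) ω) ∂μ)
        / (∫ ω, (((μ[|{ω' | Z ω' = 1}])[W | MeasurableSpace.comap X inferInstance]) ω -
                 ((μ[|{ω' | Z ω' = 0}])[W | MeasurableSpace.comap X inferInstance]) ω) ∂μ) := by
  have hm := hX.comap_le
  have hV : Measurable (fun ω => (Y0 ω, Y1 ω, W0 ω, W1 ω)) := by fun_prop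
  have hset := (condIndepFun_iff_condExp_inter_preimage_eq_mul hV hZm).1 hindep
  have hA1 : MeasurableSet {ω | Z ω = 1} := hZm (measurableSet_singleton 1)
  have hA0 : MeasurableSet {ω | Z ω = 0} := hZm (measurableSet_singleton 0)
  have hZ1 : {ω | Z ω = 1}.indicator (fun _ => (1 : ℝ)) = Z := by
    ext ω; rcases hZb ω with h | h <;> simp [h]
  have hZ0 : {ω | Z ω = 0}.indicator (fun _ => (1 : ℝ)) = (fun _ => 1) - Z := by
    ext ω; rcases hZb ω with h | h <;> simp [h]
  have hZi : Integrable Z μ := hZ1 ▸ (integrable_const (1 : ℝ)).indicator hA1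
  have hpos1 : ∀ᵐ ω ∂μ, 0 < (μ⟦{ω | Z ω = 1} | MeasurableSpace.comap X inferInstance⟧) ω := by
    rw [hZ1]; exact hoverlap.mono fun _ h => h.1
  have hpos0 : ∀ᵐ ω ∂μ, 0 < (μ⟦{ω | Z ω = 0} | MeasurableSpace.comap X inferInstance⟧) ω := by
    rw [hZ0]
    filter_upwards [hoverlap, condExp_sub (integrable_const (1 : ℝ)) hZi
      (MeasurableSpace.comap X inferInstance)] with ω h h'
    rw [h', Pi.sub_apply, condExp_const hm]
    linarith [h.2]
  have gen1 : ∀ (u : ℝ × ℝ × ℝ × ℝ → ℝ) (T : Ω → ℝ), Measurable u →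
      Integrable (fun ω => u (Y0 ω, Y1 ω, W0 ω, W1 ω)) μ →
      (∀ ω, Z ω = 1 → T ω = u (Y0 ω, Y1 ω, W0 ω, W1 ω)) →
      (μ[|{ω' | Z ω' = 1}])[T | MeasurableSpace.comap X inferInstance] =ᵐ[μ] μ[fun ω => u (Y0 ω, Y1 ω, W0 ω, W1 ω) | MeasurableSpace.comap X inferInstance] :=
    fun u T hu hU hT => condExp_cond_ae_eq hm hA1 hV hu
      (fun t ht => hset t {1} ht (measurableSet_singleton 1)) hpos1 hU hT
  have gen0 : ∀ (u : ℝ × ℝ × ℝ × ℝ → ℝ) (T : Ω → ℝ), Measurable u →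
      Integrable (fun ω => u (Y0 ω, Y1 ω, W0 ω, W1 ω)) μ →
      (∀ ω, Z ω = 0 → T ω = u (Y0 ω, Y1 ω, W0 ω, W1 ω)) →
      (μ[|{ω' | Z ω' = 0}])[T | MeasurableSpace.comap X inferInstance] =ᵐ[μ] μ[fun ω => u (Y0 ω, Y1 ω, W0 ω, W1 ω) | MeasurableSpace.comap X inferInstance] :=
    fun u T hu hU hT => condExp_cond_ae_eq hm hA0 hV hu
      (fun t ht => hset t {0} ht (measurableSet_singleton 0)) hpos0 hU hT
  have int_mul : ∀ D f : Ω → ℝ, Measurable D → (∀ ω, D ω = 0 ∨ D ω = 1) → Integrable f μ →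
      Integrable (fun ω => D ω * f ω) μ := fun D f hD hDb hf =>
    hf.bdd_mul (c := 1) hD.aestronglyMeasurable (Filter.Eventually.of_forall fun ω => by
      rcases hDb ω with h | h <;> simp [h])
  have int_mix : ∀ D : Ω → ℝ, Measurable D → (∀ ω, D ω = 0 ∨ D ω = 1) →
      Integrable (fun ω => D ω * Y1 ω + (1 - D ω) * Y0 ω) μ := fun D hD hDb =>
    (int_mul D Y1 hD hDb hY1).add (int_mul (fun ω => 1 - D ω) Y0 (by fun_prop)
      (fun ω => by rcases hDb ω with h | h <;> simp [h]) hY0)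
  have hW1i : Integrable W1 μ := by
    simpa using int_mul W1 (fun _ => 1) hW1m hW1b (integrable_const 1)
  have hW0i : Integrable W0 μ := by
    simpa using int_mul W0 (fun _ => 1) hW0m hW0b (integrable_const 1)
  have hU1 := int_mix W1 hW1m hW1b
  have hU0 := int_mix W0 hW0m hW0b
  have cY1 := gen1 (fun p => p.2.2.2 * p.2.1 + (1 - p.2.2.2) * p.1) Y (by fun_prop) hU1
    (fun ω h => by simp [hYdef, hWdef, h])
  have cY0 := gen0 (fun p => p.2.2.1 * p.2.1 + (1 - p.2.2.1) * p.1) Y (by fun_prop) hU0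
    (fun ω h => by simp [hYdef, hWdef, h])
  have cW1 := gen1 (fun p => p.2.2.2) W (by fun_prop) hW1i (fun ω h => by simp [hWdef, h])
  have cW0 := gen0 (fun p => p.2.2.1) W (by fun_prop) hW0i (fun ω h => by simp [hWdef, h])
  have hC : MeasurableSet {ω | W0 ω < W1 ω} := measurableSet_lt hW0m hW1m
  have hnum : ∀ (T : Ω → ℝ) (U1 U0 : Ω → ℝ), Integrable U1 μ → Integrable U0 μ →
      (μ[|{ω' | Z ω' = 1}])[T | MeasurableSpace.comap X inferInstance] =ᵐ[μ] μ[U1 | MeasurableSpace.comap X inferInstance] →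
      (μ[|{ω' | Z ω' = 0}])[T | MeasurableSpace.comap X inferInstance] =ᵐ[μ] μ[U0 | MeasurableSpace.comap X inferInstance] →
      ∫ ω, (((μ[|{ω' | Z ω' = 1}])[T | MeasurableSpace.comap X inferInstance]) ω - ((μ[|{ω' | Z ω' = 0}])[T | MeasurableSpace.comap X inferInstance]) ω) ∂μ
        = ∫ ω, (U1 ω - U0 ω) ∂μ := fun T U1 U0 h1 h0 e1 e0 => by
    refine (integral_congr_ae (e1.sub e0)).trans ?_
    simp only [Pi.sub_apply]
    rw [integral_sub integrable_condExp integrable_condExp, integral_condExp hm, integral_condExp hm,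
      integral_sub h1 h0]
  rw [hnum Y _ _ hU1 hU0 cY1 cY0, hnum W _ _ hW1i hW0i cW1 cW0]
  -- By monotonicity `W1 - W0` is almost surely the indicator of the compliers.
  have hind : ∀ f : Ω → ℝ,
      ∫ ω, (W1 ω - W0 ω) * f ω ∂μ = ∫ ω in {ω | W0 ω < W1 ω}, f ω ∂μ := fun f => by
    rw [← integral_indicator hC]
    refine integral_congr_ae ?_
    filter_upwards [hmono] with ω hω
    rcases hW0b ω with h | h <;> rcases hW1b ω with h' | h' <;> simp [h, h'] at hω ⊢
    linarith
  have e1 : ∫ ω, ((W1 ω * Y1 ω + (1 - W1 ω) * Y0 ω) - (W0 ω * Y1 ω + (1 - W0 ω) * Y0 ω)) ∂μ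
      = ∫ ω in {ω | W0 ω < W1 ω}, (Y1 ω - Y0 ω) ∂μ := by
    rw [← hind]; congr 1; ext ω; ring
  have e2 : ∫ ω, (W1 ω - W0 ω) ∂μ = μ.real {ω | W0 ω < W1 ω} := by
    simpa using hind fun _ => 1
  rw [e1, e2, ProbabilityTheory.cond, integral_smul_measure, ENNReal.toReal_inv, smul_eq_mul,
    div_eq_inv_mul, measureReal_def]
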